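/- Let K = K(Ω(ℝ)) = {(U,V) : U open in ℝ, V regular open in ℝ, U ⊆ V}. Then the complete lattice S_c(K) is not a coframe: there exist S ∈ S_c(K) and a family (Tᵢ)_{i ∈ I} in S_c(K) such that S ⋁ inf_{S_c}(Tᵢ) ≠ inf_{S_c}(S ⋁ Tᵢ), where inf_{S_c} of a family in S_c(K) is its infimum in S_c(K), namely the largest element of S_c(K) contained in the intersection of the family. -/

import Mathlib

open Set

/-- A subset of ℝ is *regular open* if it equals the interior of its closure. -/
def IsRegOpen (s : Set ℝ) : Prop := s = interior (closure s)

lemma isRegOpen_interior_closure (s : Set ℝ) : IsRegOpen (interior (closure s)) := by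
  refine subset_antisymm (interior_maximal subset_closure isOpen_interior) ?_
  have h : closure (interior (closure s)) ⊆ closure s := by
    simpa [closure_closure] using closure_mono (interior_subset (s := closure s))
  exact interior_mono h

lemma isRegOpen_univ : IsRegOpen (univ : Set ℝ) := by
  simp [IsRegOpen]

lemma IsRegOpen.isOpen {s : Set ℝ} (hs : IsRegOpen s) : IsOpen s := by
  rw [hs]; exact isOpen_interior

lemma isRegOpen_iInter_prop {P : Prop} {V : Set ℝ} (h : IsRegOpen V) :
    IsRegOpen (⋂ _ : P, V) := by
  by_cases hp : P
  · simpa [hp] using h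
  · simp [hp, isRegOpen_univ]

lemma isRegOpen_interior_iInter {ι : Sort*} {V : ι → Set ℝ} (h : ∀ i, IsRegOpen (V i)) :
    IsRegOpen (interior (⋂ i, V i)) := by
  refine subset_antisymm (interior_maximal subset_closure isOpen_interior) ?_
  refine interior_maximal (subset_iInter fun i => ?_) isOpen_interior
  have h1 : interior (closure (interior (⋂ i, V i))) ⊆ interior (closure (V i)) :=
    interior_mono (closure_mono (interior_subset.trans (iInter_subset V i)))
  exact h1.trans (h i).symm.subset

lemma IsRegOpen.inter {s t : Set ℝ} (hs : IsRegOpen s) (ht : IsRegOpen t) :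
    IsRegOpen (s ∩ t) := by
  refine subset_antisymm (interior_maximal subset_closure (hs.isOpen.inter ht.isOpen)) ?_
  refine subset_inter ?_ ?_
  · exact (interior_mono (closure_mono inter_subset_left)).trans hs.symm.subset
  · exact (interior_mono (closure_mono inter_subset_right)).trans ht.symm.subset

/-- The frame `K(Ω(ℝ))`: pairs `(U, V)` with `U` open in ℝ, `V` regular open in ℝ and
`U ⊆ V`, ordered componentwise by inclusion. -/
def KOmegaR : Type := {p : Set ℝ × Set ℝ // IsOpen p.1 ∧ IsRegOpen p.2 ∧ p.1 ⊆ p.2}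

namespace KOmegaR

instance : PartialOrder KOmegaR := Subtype.partialOrder _

/-- The top element `(ℝ, ℝ)` of `K(Ω(ℝ))`. -/
def top : KOmegaR := ⟨(univ, univ), isOpen_univ, isRegOpen_univ, subset_rfl⟩

/-- Infima in `K(Ω(ℝ))` are given by `(interior ⋂ᵢ Uᵢ, interior ⋂ᵢ Vᵢ)`. -/
noncomputable def inf (S : Set KOmegaR) : KOmegaR :=
  ⟨(interior (⋂ p ∈ S, (p : KOmegaR).1.1), interior (⋂ p ∈ S, (p : KOmegaR).1.2)),
    isOpen_interior,
    isRegOpen_interior_iInter fun p => isRegOpen_iInter_prop p.2.2.1,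
    interior_mono (iInter₂_mono fun p _ => p.2.2.2)⟩

/-- Suprema in `K(Ω(ℝ))` are given by `(⋃ᵢ Uᵢ, interior (closure (⋃ᵢ Vᵢ)))`. -/
noncomputable def sup (S : Set KOmegaR) : KOmegaR :=
  ⟨(⋃ p ∈ S, (p : KOmegaR).1.1, interior (closure (⋃ p ∈ S, (p : KOmegaR).1.2))),
    isOpen_biUnion fun p _ => p.2.1,
    isRegOpen_interior_closure _,
    interior_maximal ((iUnion₂_mono fun p _ => p.2.2.2).trans subset_closure)
      (isOpen_biUnion fun p _ => p.2.1)⟩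

/-- The binary meet in `K(Ω(ℝ))` is the componentwise intersection. -/
def meet (a b : KOmegaR) : KOmegaR :=
  ⟨(a.1.1 ∩ b.1.1, a.1.2 ∩ b.1.2),
    a.2.1.inter b.2.1, a.2.2.1.inter b.2.2.1,
    inter_subset_inter a.2.2.2 b.2.2.2⟩

/-- The Heyting implication in the frame `K(Ω(ℝ))`:
`a ⇨ b` is the largest `x` with `x ⊓ a ≤ b`. -/
noncomputable def himp (a b : KOmegaR) : KOmegaR :=
  sup {x : KOmegaR | meet x a ≤ b}

/-- The closed sublocale `c(a) = {x | a ≤ x}` of `K(Ω(ℝ))`. -/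
def closedSl (a : KOmegaR) : Set KOmegaR := {x | a ≤ x}

/-- The open sublocale `o(a) = {a ⇨ b | b}` of `K(Ω(ℝ))`. -/
noncomputable def openSl (a : KOmegaR) : Set KOmegaR := {x | ∃ b : KOmegaR, x = himp a b}

/-- The join, in the coframe of sublocales of `K(Ω(ℝ))`, of a collection `𝒮` of
sublocales: it consists of all infima of subsets of `⋃₀ 𝒮`. -/
noncomputable def slJoin (𝒮 : Set (Set KOmegaR)) : Set KOmegaR :=
  {x | ∃ M : Set KOmegaR, M ⊆ ⋃₀ 𝒮 ∧ x = inf M}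

/-- `S_c(K(Ω(ℝ)))`: all joins of families of closed sublocales. -/
noncomputable def Sc : Set (Set KOmegaR) :=
  {S | ∃ A : Set KOmegaR, S = slJoin (closedSl '' A)}

end KOmegaR

/-- The infimum, *computed in the complete lattice `S_c(K(Ω(ℝ)))`*, of a family of
elements of `S_c(K(Ω(ℝ)))`: the largest element of `S_c` contained in the intersection
of the family, namely the join of all closed sublocales contained in the intersection. -/
noncomputable def ScInf {ι : Type*} (T : ι → Set KOmegaR) : Set KOmegaR :=
  KOmegaR.slJoin (KOmegaR.closedSl '' {a : KOmegaR | KOmegaR.closedSl a ⊆ ⋂ i, T i})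

namespace KOmegaR

lemma mem_inf_fst {M : Set KOmegaR} {y : KOmegaR} (hy : y ∈ M) : (inf M).1.1 ⊆ y.1.1 :=
  interior_subset.trans (iInter₂_subset y hy)

lemma mem_inf_snd {M : Set KOmegaR} {y : KOmegaR} (hy : y ∈ M) : (inf M).1.2 ⊆ y.1.2 :=
  interior_subset.trans (iInter₂_subset y hy)

lemma inf_fst_univ {M : Set KOmegaR} (h : ∀ y ∈ M, y.1.1 = univ) : (inf M).1.1 = univ := by
  have : (⋂ p ∈ M, (p : KOmegaR).1.1) = univ := by simpa using h
  show interior (⋂ p ∈ M, (p : KOmegaR).1.1) = univ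
  rw [this, interior_univ]

lemma inf_snd_univ {M : Set KOmegaR} (h : ∀ y ∈ M, y.1.2 = univ) : (inf M).1.2 = univ := by
  have : (⋂ p ∈ M, (p : KOmegaR).1.2) = univ := by simpa using h
  show interior (⋂ p ∈ M, (p : KOmegaR).1.2) = univ
  rw [this, interior_univ]

lemma le_inf {M : Set KOmegaR} {x : KOmegaR} (h : ∀ y ∈ M, x ≤ y) : x ≤ inf M :=
  ⟨interior_maximal (subset_iInter₂ fun y hy => (h y hy).1) x.2.1,
    interior_maximal (subset_iInter₂ fun y hy => (h y hy).2) x.2.2.1.isOpen⟩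

lemma inf_singleton (x : KOmegaR) : x = inf {x} :=
  le_antisymm (le_inf (by rintro y rfl; exact le_rfl))
    ⟨mem_inf_fst (mem_singleton x), mem_inf_snd (mem_singleton x)⟩

lemma mem_slJoin {𝒮 : Set (Set KOmegaR)} {s : Set KOmegaR} {x : KOmegaR} (hs : s ∈ 𝒮)
    (hx : x ∈ s) : x ∈ slJoin 𝒮 :=
  ⟨{x}, by rintro y rfl; exact ⟨s, hs, hx⟩, inf_singleton x⟩

/-- The point `(ℝ ∖ {q}, ℝ)`. -/
def pt (q : ℝ) : KOmegaR := ⟨({q}ᶜ, univ), isOpen_compl_singleton, isRegOpen_univ, subset_univ _⟩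

/-- The bottom element. -/
def bo : KOmegaR := ⟨(∅, ∅), isOpen_empty, by simp [IsRegOpen], subset_rfl⟩

/-- The join of `x` with the ball of radius `r` around `q`. -/
noncomputable def enl (x : KOmegaR) (q r : ℝ) : KOmegaR :=
  ⟨(x.1.1 ∪ Metric.ball q r, interior (closure (x.1.2 ∪ Metric.ball q r))),
    x.2.1.union Metric.isOpen_ball, isRegOpen_interior_closure _,
    interior_maximal ((union_subset_union_left _ x.2.2.2).trans subset_closure)
      (x.2.1.union Metric.isOpen_ball)⟩

lemma le_enl (x : KOmegaR) (q r : ℝ) : x ≤ enl x q r :=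
  ⟨subset_union_left, interior_maximal (subset_union_left.trans subset_closure) x.2.2.1.isOpen⟩

/-- The join of all rational points. -/
noncomputable def SS : Set KOmegaR := slJoin (closedSl '' {x | ∃ q : ℚ, x = pt q})

/-- The join of all closed sublocales missing `q`. -/
noncomputable def TT (q : ℚ) : Set KOmegaR := slJoin (closedSl '' {y | (q : ℝ) ∈ y.1.1})

lemma enl_mem_TT (x : KOmegaR) (q : ℚ) {r : ℝ} (hr : 0 < r) : enl x q r ∈ TT q :=
  mem_slJoin (mem_image_of_mem _ (show (q : ℝ) ∈ (enl x q r).1.1 from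
    Or.inr (Metric.mem_ball_self hr))) (le_refl (enl x q r))

lemma pt_mem_SS (q : ℚ) : pt q ∈ SS :=
  mem_slJoin (mem_image_of_mem _ ⟨q, rfl⟩) (le_refl (pt q))

lemma join_all (q : ℚ) (x : KOmegaR) : x ∈ slJoin {SS, TT q} := by
  refine ⟨{y | (y ∈ SS ∨ y ∈ TT q) ∧ x ≤ y}, ?_, ?_⟩
  · rintro y ⟨h | h, -⟩
    · exact ⟨SS, by simp, h⟩
    · exact ⟨TT q, by simp, h⟩
  refine le_antisymm (le_inf fun y hy => hy.2) ?_
  set M : Set KOmegaR := {y | (y ∈ SS ∨ y ∈ TT q) ∧ x ≤ y} with hM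
  have hE : ∀ r : ℝ, 0 < r → enl x q r ∈ M := fun r hr => ⟨Or.inr (enl_mem_TT x q hr), le_enl _ _ _⟩
  have h2 : ∀ z ∈ (inf M).1.2, z ≠ q → z ∈ closure x.1.2 := by
    intro z hz hzq
    have hd : 0 < dist z q := dist_pos.2 hzq
    have := interior_subset (mem_inf_snd (hE (dist z q / 2) (by linarith)) hz)
    rw [closure_union] at this
    rcases this with h | h
    · exact h
    · have := Metric.closure_ball_subset_closedBall h
      rw [Metric.mem_closedBall] at this
      linarith
  constructor
  · intro z hz
    by_contra hzU
    by_cases hzq : z = q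
    · have hp : pt q ∈ M := by
        refine ⟨Or.inl (pt_mem_SS q), ?_, subset_univ _⟩
        intro w hw hwq
        apply hzU
        rw [hzq, ← show w = (q : ℝ) from hwq]
        exact hw
      exact mem_inf_fst hp hz hzq
    · have hd : 0 < dist z q := dist_pos.2 hzq
      rcases mem_inf_fst (hE (dist z q / 2) (by linarith)) hz with h | h
      · exact hzU h
      · rw [Metric.mem_ball] at h
        linarith
  · show (inf M).1.2 ⊆ x.1.2
    rw [x.2.2.1]
    refine interior_maximal ?_ (inf M).2.2.1.isOpen
    have hd : Dense ({(q : ℝ)}ᶜ : Set ℝ) := dense_compl_singleton _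
    have := hd.open_subset_closure_inter (inf M).2.2.1.isOpen
    refine this.trans (closure_minimal ?_ isClosed_closure)
    rintro z ⟨hz, hzq⟩
    exact h2 z hz hzq

lemma SS_snd {x : KOmegaR} (hx : x ∈ SS) : x.1.2 = univ := by
  obtain ⟨M, hM, rfl⟩ := hx
  refine inf_snd_univ fun y hy => ?_
  obtain ⟨_, ⟨_, ⟨q, rfl⟩, rfl⟩, hy'⟩ := hM hy
  exact univ_subset_iff.1 hy'.2

lemma pt_not_mem_TT (q : ℚ) : pt q ∉ TT q := by
  rintro ⟨M, hM, h⟩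
  have hu : (inf M).1.1 = univ := by
    refine inf_fst_univ fun y hy => ?_
    obtain ⟨_, ⟨a, ha, rfl⟩, hay⟩ := hM hy
    have h1 : (pt q).1.1 ⊆ y.1.1 := by rw [h]; exact mem_inf_fst hy
    refine eq_univ_of_forall fun z => ?_
    by_cases hz : z = q
    · rw [hz]; exact hay.1 ha
    · exact h1 hz
  rw [← h] at hu
  have : (q : ℝ) ∈ (pt q).1.1 := by rw [hu]; trivial
  exact this rfl

lemma snd_of_closed {a : KOmegaR} (ha : closedSl a ⊆ ⋂ q, TT q) : a.1.2 = univ := by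
  have hq : ∀ q : ℚ, (q : ℝ) ∈ a.1.1 := by
    intro q
    by_contra hn
    refine pt_not_mem_TT q (mem_iInter.1 (ha (show a ≤ pt q from ⟨?_, subset_univ _⟩)) q)
    intro w hw hwq
    exact hn ((show w = (q : ℝ) from hwq) ▸ hw)
  have hd : Dense a.1.2 := Rat.denseRange_cast.mono (by
    rintro _ ⟨q, rfl⟩
    exact a.2.2.2 (hq q))
  rw [a.2.2.1, hd.closure_eq, interior_univ]

lemma ScInf_snd {x : KOmegaR} (hx : x ∈ ScInf TT) : x.1.2 = univ := by
  obtain ⟨M, hM, rfl⟩ := hx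
  refine inf_snd_univ fun y hy => ?_
  obtain ⟨_, ⟨a, ha, rfl⟩, hy'⟩ := hM hy
  have := snd_of_closed ha
  exact univ_subset_iff.1 (this ▸ hy'.2)

end KOmegaR

/-- The complete lattice `S_c(K(Ω(ℝ)))` is not a coframe: there exist
`S ∈ S_c(K)` and a family `(Tᵢ)ᵢ` in `S_c(K)` such that
`S ⋁ inf_{S_c} Tᵢ ≠ inf_{S_c} (S ⋁ Tᵢ)`. -/
theorem Sc_KOmegaR_not_coframe :
    ∃ S ∈ KOmegaR.Sc, ∃ (ι : Type) (T : ι → Set KOmegaR),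
      (∀ i, T i ∈ KOmegaR.Sc) ∧
      KOmegaR.slJoin {S, ScInf T} ≠ ScInf (fun i => KOmegaR.slJoin {S, T i}) := by
  refine ⟨KOmegaR.SS, ⟨_, rfl⟩, ℚ, KOmegaR.TT, fun q => ⟨_, rfl⟩, fun h => ?_⟩
  have h1 : KOmegaR.bo ∈ ScInf (fun i => KOmegaR.slJoin {KOmegaR.SS, KOmegaR.TT i}) :=
    KOmegaR.mem_slJoin (mem_image_of_mem _ (fun x _ => mem_iInter.2 fun q => KOmegaR.join_all q x))
      (le_refl KOmegaR.bo)
  rw [← h] at h1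
  obtain ⟨M, hM, hb⟩ := h1
  have hu : (KOmegaR.inf M).1.2 = univ := by
    refine KOmegaR.inf_snd_univ fun y hy => ?_
    obtain ⟨s, hs, hys⟩ := hM hy
    rcases hs with rfl | rfl
    · exact KOmegaR.SS_snd hys
    · exact KOmegaR.ScInf_snd hys
  rw [← hb] at hu
  exact empty_ne_univ hu
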